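/- Let f, τ : ℝ → ℂ be 2π-periodic and C^∞, with τ′(α) ≠ 0 for all α and τ(α) ≠ τ(β) whenever α − β is not an integer multiple of 2π, and let ρ be a filter function. For a discrete function q define I_h(q)_i = (h/π) Σ_{j, (j−i) odd} f(α_j) q_j / (τ(α_j) − τ(α_i)) and K_{1h}(q)_i = (h/π) Σ_{j, (j−i) odd} q_j [ f(α_j)/(τ(α_j) − τ(α_i)) − (f(α_i)/(2τ′(α_i))) cot((α_j − α_i)/2) ], both sums over j ∈ {−N/2+1, …, N/2} with j − i odd. Then for every even N ≥ 2 and every discrete q, I_h(q)_i = −(f(α_i)/(2τ′(α_i)))(H_h q)_i + K_{1h}(q)_i for all i, and there exists a constant c > 0, depending only on f, τ and ρ and not on N or φ, such that ‖D_h^k(K_{1h}(φ^p))‖_{l²} ≤ c ‖φ‖_{l²} for every discrete φ and every k ∈ {0, 1, 2}. -/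

import Mathlib

open scoped BigOperators
open Finset

noncomputable section

/-- Grid spacing `h = 2π/N`. -/
def hgrid (N : ℤ) : ℝ := 2 * Real.pi / N

/-- Grid points `α_j = j h`. -/
def gridPt (N : ℤ) (j : ℤ) : ℝ := j * hgrid N

/-- Index set `{-N/2+1, …, N/2}`. -/
def idxs (N : ℤ) : Finset ℤ := Finset.Icc (-(N / 2) + 1) (N / 2)

/-- Discrete Fourier coefficient `f̂_k`. -/
def dft (N : ℤ) (f : ℤ → ℂ) (k : ℤ) : ℂ :=
  (N : ℂ)⁻¹ * ∑ j ∈ idxs N, f j * Complex.exp (-(Complex.I * (k : ℂ) * (gridPt N j : ℂ)))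

/-- Reconstruction of a discrete function from Fourier coefficients. -/
def idft (N : ℤ) (c : ℤ → ℂ) (j : ℤ) : ℂ :=
  ∑ k ∈ idxs N, c k * Complex.exp (Complex.I * (k : ℂ) * (gridPt N j : ℂ))

/-- The pseudo-spectral derivative `S_h`. -/
def Sh (N : ℤ) (f : ℤ → ℂ) : ℤ → ℂ :=
  idft N fun k => if k = N / 2 then 0 else Complex.I * (k : ℂ) * dft N f k

/-- The pseudo-spectral antiderivative `S_h⁻¹`. -/
def Shinv (N : ℤ) (f : ℤ → ℂ) : ℤ → ℂ :=
  idft N fun k => if k = 0 then 0 else dft N f k / (Complex.I * (k : ℂ))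

/-- The filtered discrete function `f^p`. -/
def filterP (N : ℤ) (ρ : ℝ → ℝ) (f : ℤ → ℂ) : ℤ → ℂ :=
  idft N fun k => (ρ (gridPt N k) : ℂ) * dft N f k

/-- The filtered derivative `D_h`. -/
def Dh (N : ℤ) (ρ : ℝ → ℝ) (f : ℤ → ℂ) : ℤ → ℂ :=
  idft N fun k => Complex.I * (k : ℂ) * (ρ (gridPt N k) : ℂ) * dft N f k

/-- Discrete `l²` norm. -/
def l2norm (N : ℤ) (f : ℤ → ℂ) : ℝ :=
  Real.sqrt (hgrid N * ∑ j ∈ idxs N, ‖f j‖ ^ 2)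

/-- Discrete Hilbert transform `H_h`. -/
def Hh (N : ℤ) (f : ℤ → ℂ) (i : ℤ) : ℂ :=
  ((hgrid N / Real.pi : ℝ) : ℂ) *
    ∑ j ∈ (idxs N).filter (fun j => Odd (j - i)),
      f j * (Real.cot ((gridPt N i - gridPt N j) / 2) : ℂ)

/-- Discrete inner product `(f,g)_h`. -/
def dip (N : ℤ) (f g : ℤ → ℂ) : ℂ :=
  (hgrid N : ℂ) * ∑ j ∈ idxs N, (starRingEnd ℂ) (f j) * g j

/-- Discrete mean `⟨f⟩_h`. -/
def dmean (N : ℤ) (f : ℤ → ℂ) : ℂ :=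
  (N : ℂ)⁻¹ * ∑ j ∈ idxs N, f j

/-- The discrete function of samples of a periodic function. -/
def samples (N : ℤ) (f : ℝ → ℂ) : ℤ → ℂ := fun j => f (gridPt N j)

/-- Fourier coefficient of a `2π`-periodic function. -/
def fourierCoeffP (f : ℝ → ℂ) (k : ℤ) : ℂ :=
  ((2 * Real.pi)⁻¹ : ℝ) * ∫ α in (-Real.pi)..Real.pi, f α * Complex.exp (-(Complex.I * (k : ℂ) * (α : ℂ)))

/-- Sobolev norm `‖f‖_s`. -/
def sobolevNorm (s : ℕ) (f : ℝ → ℂ) : ℝ :=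
  Real.sqrt (∑' k : ℤ, (1 + (k : ℝ) ^ 2) ^ s * ‖fourierCoeffP f k‖ ^ 2)

/-- A filter (cutoff) function for numerical filtering. -/
structure IsFilter (ρ : ℝ → ℝ) : Prop where
  even : ∀ x, ρ (-x) = ρ x
  nonneg : ∀ x, 0 ≤ ρ x
  smooth : ∃ r : ℕ, 2 < r ∧ ContDiff ℝ r ρ
  zero_at_pi : ρ Real.pi = 0
  zero_at_neg_pi : ρ (-Real.pi) = 0
  deriv_zero_at_pi : deriv ρ Real.pi = 0
  deriv_zero_at_neg_pi : deriv ρ (-Real.pi) = 0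
  one_near_zero : ∃ μ : ℝ, 0 < μ ∧ μ < 1 ∧ ∀ x : ℝ, |x| ≤ μ * Real.pi → ρ x = 1

/-- The singular sum `I_h`. -/
def Ih (N : ℤ) (f τ : ℝ → ℂ) (q : ℤ → ℂ) (i : ℤ) : ℂ :=
  ((hgrid N / Real.pi : ℝ) : ℂ) * ∑ j ∈ (idxs N).filter (fun j => Odd (j - i)),
    f (gridPt N j) * q j / (τ (gridPt N j) - τ (gridPt N i))

/-- The remainder operator `K_{1h}[f,τ]`. -/
def K1h (N : ℤ) (f τ : ℝ → ℂ) (q : ℤ → ℂ) (i : ℤ) : ℂ :=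
  ((hgrid N / Real.pi : ℝ) : ℂ) * ∑ j ∈ (idxs N).filter (fun j => Odd (j - i)),
    q j * (f (gridPt N j) / (τ (gridPt N j) - τ (gridPt N i)) -
      f (gridPt N i) / (2 * deriv τ (gridPt N i)) *
        (Real.cot ((gridPt N j - gridPt N i) / 2) : ℂ))

/-!
Write the kernel of `K1h` in the coordinates `b = α_j` and `u = α_i - α_j`. Its two singularities at
`u ∈ 2πℤ` cancel, so it is a smooth numerator, vanishing wherever `sin (u / 2)` does, divided by
`sin (u / 2)`. Those zeros are simple, hence the quotient extends smoothly to all of `ℝ²`.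

Replacing `i` by `i + 2` preserves the parity condition on `j - i`. The `n`-th two-step difference
of `K1h φ` is therefore again a sum over odd `j - i`, whose kernel is the `n`-th difference of a
smooth function with step `2h`; Cauchy–Schwarz bounds its `l²`-norm by `O(hⁿ) ‖φ‖`.

On the Fourier side the two-step difference multiplies the `k`-th coefficient by
`exp (2ikh) - 1`, of modulus `2 |sin (kh)|`, which degenerates at `kh = ±π`. Since `ρ` is Lipschitz
and vanishes there, `|x ρ(x)|` is at most a multiple of `|sin x|` on `[-π, π]`, and Plancherel
bounds `D_hⁿ` by `O(h⁻ⁿ)` times the `n`-th two-step difference.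
-/

open scoped ContDiff Topology fwdDiff

section DivisionBySimpleZeros

universe u

variable {H E : Type u} [NormedAddCommGroup E] [NormedSpace ℝ E]

/-- The Hadamard quotient `(F (x, u) - F (x, u₀)) / (u - u₀)` in the second variable, encoded as an
integral so that it is defined, and smooth, across `u = u₀`. -/
def hadamardQuotient (F : H × ℝ → E) (u₀ : ℝ) (p : H × ℝ) : E :=
  ∫ s in (0 : ℝ)..1, deriv (fun v => F (p.1, v)) (u₀ + s * (p.2 - u₀))

theorem hadamardQuotient_self [CompleteSpace E] (F : H × ℝ → E) (u₀ : ℝ) (x : H) :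
    hadamardQuotient F u₀ (x, u₀) = deriv (fun v => F (x, v)) u₀ := by
  simp [hadamardQuotient]

/-- The quotient `F (x, u) / s u`, extended over the zeros of `s` by l'Hôpital's rule. -/
def quotientSnd (s : ℝ → ℝ) (F : H × ℝ → E) (p : H × ℝ) : E :=
  if s p.2 = 0 then (deriv s p.2)⁻¹ • deriv (fun v => F (p.1, v)) p.2 else (s p.2)⁻¹ • F p

theorem quotientSnd_of_eq_zero {s : ℝ → ℝ} {u : ℝ} (hu : s u = 0) (F : H × ℝ → E) (x : H) :
    quotientSnd s F (x, u) = (deriv s u)⁻¹ • deriv (fun v => F (x, v)) u := if_pos hu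

theorem quotientSnd_of_ne_zero {s : ℝ → ℝ} {u : ℝ} (hu : s u ≠ 0) (F : H × ℝ → E) (x : H) :
    quotientSnd s F (x, u) = (s u)⁻¹ • F (x, u) := if_neg hu

variable [NormedAddCommGroup H] [NormedSpace ℝ H]

theorem hasFDerivAt_intervalIntegral_of_contDiff {F : H × ℝ → E} (hF : ContDiff ℝ 1 F)
    (a b : ℝ) (x : H) :
    HasFDerivAt (fun x => ∫ s in a..b, F (x, s))
      (∫ s in a..b, (fderiv ℝ F (x, s)).comp (ContinuousLinearMap.inl ℝ H ℝ)) x := by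
  set F' : H × ℝ → H →L[ℝ] E := fun p => (fderiv ℝ F p).comp (ContinuousLinearMap.inl ℝ H ℝ)
  have hF' : Continuous F' := (hF.continuous_fderiv one_ne_zero).clm_comp continuous_const
  obtain ⟨C, hC⟩ := isCompact_uIcc.exists_bound_of_continuousOn
    (hF'.comp (Continuous.prodMk_right x)).continuousOn (s := Set.uIcc a b)
  have hnear : ∀ᶠ y in 𝓝 x, ∀ s ∈ Set.uIcc a b, ‖F' (y, s)‖ < C + 1 :=
    isCompact_uIcc.eventually_forall_of_forall_eventually fun s hs =>
      hF'.norm.continuousAt.eventually_lt continuousAt_const ((hC s hs).trans_lt (lt_add_one C))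
  refine intervalIntegral.hasFDerivAt_integral_of_dominated_of_fderiv_le
    (F := fun x s => F (x, s)) (F' := fun x s => F' (x, s)) (bound := fun _ => C + 1) hnear
    (.of_forall fun y => (hF.continuous.comp (Continuous.prodMk_right y)).aestronglyMeasurable)
    ((hF.continuous.comp (Continuous.prodMk_right x)).intervalIntegrable _ _)
    (hF'.comp (Continuous.prodMk_right x)).aestronglyMeasurable
    (.of_forall fun s hs y hy => (hy s (Set.uIoc_subset_uIcc hs)).le)
    intervalIntegrable_const
    (.of_forall fun s _ y _ => ?_)
  exact (hF.differentiable one_ne_zero (y, s)).hasFDerivAt.comp y (hasFDerivAt_prodMk_left y s)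

theorem contDiff_intervalIntegral {F : H × ℝ → E} (hF : ContDiff ℝ ∞ F) (a b : ℝ) :
    ContDiff ℝ ∞ fun x => ∫ s in a..b, F (x, s) := by
  refine contDiff_infty.2 fun n => ?_
  induction n generalizing E with
  | zero =>
    exact contDiff_zero.2 (intervalIntegral.continuous_parametric_intervalIntegral_of_continuous'
      (f := fun x s => F (x, s)) hF.continuous a b)
  | succ n ih =>
    rw [Nat.cast_succ, contDiff_succ_iff_hasFDerivAt]
    exact ⟨_, ih ((hF.fderiv_right le_rfl).clm_comp contDiff_const),
      hasFDerivAt_intervalIntegral_of_contDiff (hF.of_le (by simp)) a b⟩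

theorem contDiff_deriv_snd {F : H × ℝ → E} (hF : ContDiff ℝ ∞ F) :
    ContDiff ℝ ∞ fun p : H × ℝ => deriv (fun v => F (p.1, v)) p.2 := by
  have hderiv : (fun p : H × ℝ => deriv (fun v => F (p.1, v)) p.2) =
      fun p => fderiv ℝ F p (0, 1) := by
    funext p
    exact ((hF.differentiable (by simp) p).hasFDerivAt.comp_hasDerivAt p.2
      ((hasDerivAt_const p.2 p.1).prodMk (hasDerivAt_id p.2))).deriv
  rw [hderiv]
  exact (hF.fderiv_right le_rfl).clm_apply contDiff_const

theorem contDiff_iteratedDeriv_snd {F : H × ℝ → E} (hF : ContDiff ℝ ∞ F) (n : ℕ) :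
    ContDiff ℝ ∞ fun p : H × ℝ => iteratedDeriv n (fun v => F (p.1, v)) p.2 := by
  induction n with
  | zero => simpa only [iteratedDeriv_zero] using hF
  | succ n ih => simpa only [iteratedDeriv_succ] using contDiff_deriv_snd ih

theorem differentiable_prodMk_snd {F : H × ℝ → E} (hF : ContDiff ℝ ∞ F) (x : H) :
    Differentiable ℝ fun v => F (x, v) :=
  (hF.comp (contDiff_prodMk_right x)).differentiable (by simp)

theorem contDiff_hadamardQuotient {F : H × ℝ → E} (hF : ContDiff ℝ ∞ F) (u₀ : ℝ) :
    ContDiff ℝ ∞ (hadamardQuotient F u₀) :=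
  contDiff_intervalIntegral (F := fun q : (H × ℝ) × ℝ =>
    deriv (fun v => F (q.1.1, v)) (u₀ + q.2 * (q.1.2 - u₀)))
    ((contDiff_deriv_snd hF).comp
      (f := fun q : (H × ℝ) × ℝ => (q.1.1, u₀ + q.2 * (q.1.2 - u₀))) (by fun_prop)) 0 1

theorem sub_smul_hadamardQuotient [CompleteSpace E] {F : H × ℝ → E} (hF : ContDiff ℝ ∞ F)
    (u₀ : ℝ) (x : H) (u : ℝ) :
    (u - u₀) • hadamardQuotient F u₀ (x, u) = F (x, u) - F (x, u₀) := by
  set F' : ℝ → E := deriv fun v => F (x, v)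
  have hderiv (s : ℝ) : HasDerivAt (fun s => F (x, u₀ + s * (u - u₀)))
      ((u - u₀) • F' (u₀ + s * (u - u₀))) s :=
    (differentiable_prodMk_snd hF x _).hasDerivAt.scomp s
      (by simpa using ((hasDerivAt_id s).mul_const (u - u₀)).const_add u₀)
  have hcont : Continuous fun s => (u - u₀) • F' (u₀ + s * (u - u₀)) :=
    ((contDiff_deriv_snd hF).continuous.comp (f := fun s => (x, u₀ + s * (u - u₀)))
      (by fun_prop)).const_smul (u - u₀)
  rw [hadamardQuotient, ← intervalIntegral.integral_smul,
    intervalIntegral.integral_eq_sub_of_hasDerivAt (fun s _ => hderiv s)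
      (hcont.intervalIntegrable 0 1)]
  simp

theorem contDiffAt_quotientSnd_of_ne_zero {s : ℝ → ℝ} (hs : ContDiff ℝ ∞ s) {F : H × ℝ → E}
    (hF : ContDiff ℝ ∞ F) {p : H × ℝ} (hp : s p.2 ≠ 0) :
    ContDiffAt ℝ ∞ (quotientSnd s F) p := by
  have hs₂ : ContDiff ℝ ∞ fun q : H × ℝ => s q.2 := hs.comp contDiff_snd
  refine ((hs₂.contDiffAt.inv hp).smul hF.contDiffAt).congr_of_eventuallyEq ?_
  filter_upwards [hs₂.continuous.continuousAt.eventually_ne hp] with q hq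
    using quotientSnd_of_ne_zero hq F q.1

theorem contDiffAt_quotientSnd_of_eq_zero [CompleteSpace E] {s : ℝ → ℝ} (hs : ContDiff ℝ ∞ s)
    {F : H × ℝ → E} (hF : ContDiff ℝ ∞ F) {p : H × ℝ} (hFp : ∀ x, F (x, p.2) = 0)
    (hp : s p.2 = 0) (hp' : deriv s p.2 ≠ 0) : ContDiffAt ℝ ∞ (quotientSnd s F) p := by
  set u₀ := p.2
  let S : ℝ × ℝ → ℝ := fun q => s q.2
  have hS : ContDiff ℝ ∞ S := hs.comp contDiff_snd
  have hS' : ContDiff ℝ ∞ fun q : H × ℝ => hadamardQuotient S u₀ (0, q.2) :=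
    (contDiff_hadamardQuotient hS u₀).comp (contDiff_const.prodMk contDiff_snd)
  have hS'p : hadamardQuotient S u₀ (0, p.2) ≠ 0 := by rwa [hadamardQuotient_self]
  refine ((hS'.contDiffAt.inv hS'p).smul
    (contDiff_hadamardQuotient hF u₀).contDiffAt).congr_of_eventuallyEq ?_
  filter_upwards [hS'.continuous.continuousAt.eventually_ne hS'p] with ⟨x, u⟩ hu
  change _ = (hadamardQuotient S u₀ (0, u))⁻¹ • hadamardQuotient F u₀ (x, u)
  rcases eq_or_ne u u₀ with rfl | hne
  · rw [quotientSnd_of_eq_zero hp, hadamardQuotient_self, hadamardQuotient_self]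
  · have hne' := sub_ne_zero.2 hne
    have hsu : (u - u₀) * hadamardQuotient S u₀ (0, u) = s u := by
      simpa [S, hp] using sub_smul_hadamardQuotient hS u₀ 0 u
    have hFu : (u - u₀) • hadamardQuotient F u₀ (x, u) = F (x, u) := by
      simpa [hFp x] using sub_smul_hadamardQuotient hF u₀ x u
    rw [quotientSnd_of_ne_zero (hsu ▸ mul_ne_zero hne' hu), ← hsu, ← hFu, mul_inv_rev, mul_smul,
      inv_smul_smul₀ hne']

theorem contDiff_quotientSnd [CompleteSpace E] {s : ℝ → ℝ} (hs : ContDiff ℝ ∞ s)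
    (hs' : ∀ u, s u = 0 → deriv s u ≠ 0) {F : H × ℝ → E} (hF : ContDiff ℝ ∞ F)
    (hFs : ∀ x u, s u = 0 → F (x, u) = 0) : ContDiff ℝ ∞ (quotientSnd s F) :=
  contDiff_iff_contDiffAt.2 fun p =>
    if hp : s p.2 = 0 then
      contDiffAt_quotientSnd_of_eq_zero hs hF (fun x => hFs x _ hp) hp (hs' _ hp)
    else contDiffAt_quotientSnd_of_ne_zero hs hF hp

end DivisionBySimpleZeros

section ForwardDifference

variable {E : Type*} [NormedAddCommGroup E] [NormedSpace ℝ E]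

theorem norm_fwdDiff_le {g : ℝ → E} {x t C : ℝ} (hg : Differentiable ℝ g) (ht : 0 ≤ t)
    (hC : ∀ y ∈ Set.Icc x (x + t), ‖deriv g y‖ ≤ C) : ‖Δ_[t] g x‖ ≤ C * t := by
  have := (convex_Icc x (x + t)).norm_image_sub_le_of_norm_deriv_le (fun y _ => hg y) hC
    (Set.left_mem_Icc.2 (by linarith)) (Set.right_mem_Icc.2 (by linarith))
  simpa only [fwdDiff, add_sub_cancel_left, Real.norm_of_nonneg ht] using this

theorem iteratedDeriv_fwdDiff {g : ℝ → E} {n : ℕ} (hg : ContDiff ℝ n g) (t : ℝ) :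
    iteratedDeriv n (Δ_[t] g) = Δ_[t] (iteratedDeriv n g) := by
  funext x
  have hshift : ContDiff ℝ n fun y => g (y + t) := hg.comp (contDiff_id.add contDiff_const)
  change iteratedDeriv n (fun y => g (y + t) - g y) x = _
  rw [iteratedDeriv_fun_sub hshift.contDiffAt hg.contDiffAt, iteratedDeriv_comp_add_const, fwdDiff]

theorem norm_fwdDiff_iter_le {g : ℝ → E} {n : ℕ} {x t C : ℝ} (hg : ContDiff ℝ n g) (ht : 0 ≤ t)
    (hC : ∀ y ∈ Set.Icc x (x + n * t), ‖iteratedDeriv n g y‖ ≤ C) :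
    ‖Δ_[t] ^[n] g x‖ ≤ C * t ^ n := by
  induction n generalizing g C with
  | zero => simpa using hC x
  | succ n ih =>
    push_cast at hg hC
    have hgn : ContDiff ℝ n g := hg.of_le (by simp)
    have hdiff : Differentiable ℝ (iteratedDeriv n g) :=
      hg.differentiable_iteratedDeriv n (by exact_mod_cast n.lt_succ_self)
    rw [Function.iterate_succ_apply, pow_succ', ← mul_assoc]
    refine ih ((hgn.comp (contDiff_id.add contDiff_const)).sub hgn) fun y hy => ?_
    rw [iteratedDeriv_fwdDiff hgn]
    refine norm_fwdDiff_le hdiff ht fun z hz => ?_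
    rw [← iteratedDeriv_succ]
    exact hC z ⟨hy.1.trans hz.1, by linarith [hy.2, hz.2]⟩

end ForwardDifference

section Kernel

/-- The kernel of `K1h` at the points `a` (where it is evaluated) and `b` (the integration
variable). -/
def remainderKernel (f τ : ℝ → ℂ) (a b : ℝ) : ℂ :=
  f b / (τ b - τ a) - f a / (2 * deriv τ a) * (Real.cot ((b - a) / 2) : ℂ)

theorem remainderKernel_periodic {f τ : ℝ → ℂ} (hf : Function.Periodic f (2 * Real.pi))
    (hτ : Function.Periodic τ (2 * Real.pi)) (b : ℝ) :
    Function.Periodic (fun a => remainderKernel f τ a b) (2 * Real.pi) := by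
  intro a
  have hcot : Real.cot ((b - (a + 2 * Real.pi)) / 2) = Real.cot ((b - a) / 2) := by
    rw [show (b - (a + 2 * Real.pi)) / 2 = (b - a) / 2 - Real.pi by ring, Real.cot_eq_cos_div_sin,
      Real.cos_sub_pi, Real.sin_sub_pi, neg_div_neg_eq, ← Real.cot_eq_cos_div_sin]
  have hderiv : deriv τ (a + 2 * Real.pi) = deriv τ a := by
    rw [← deriv_comp_add_const, show (fun x => τ (x + 2 * Real.pi)) = τ from funext hτ]
  simp only [remainderKernel, hf a, hτ a, hderiv, hcot]

theorem sin_half_eq_zero_iff {u : ℝ} : Real.sin (u / 2) = 0 ↔ ∃ n : ℤ, u = n * (2 * Real.pi) := by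
  rw [Real.sin_eq_zero_iff]
  exact exists_congr fun n => by constructor <;> intro h <;> linarith

theorem hasDerivAt_sin_half (u : ℝ) :
    HasDerivAt (fun u => Real.sin (u / 2)) (Real.cos (u / 2) / 2) u := by
  simpa [div_eq_mul_inv] using ((hasDerivAt_id u).div_const 2).sin

theorem cos_ne_zero_of_sin_eq_zero {x : ℝ} (hx : Real.sin x = 0) : Real.cos x ≠ 0 := fun h => by
  simpa [hx, h] using Real.sin_sq_add_cos_sq x

theorem deriv_sin_half_ne_zero (u : ℝ) (hu : Real.sin (u / 2) = 0) :
    deriv (fun u => Real.sin (u / 2)) u ≠ 0 := by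
  rw [(hasDerivAt_sin_half u).deriv]
  exact div_ne_zero (cos_ne_zero_of_sin_eq_zero hu) two_ne_zero

theorem contDiff_quotientSnd_sin_half {F : ℝ × ℝ → ℂ} (hF : ContDiff ℝ ∞ F)
    (hF0 : ∀ b u, Real.sin (u / 2) = 0 → F (b, u) = 0) :
    ContDiff ℝ ∞ (quotientSnd (fun u => Real.sin (u / 2)) F) :=
  contDiff_quotientSnd (by fun_prop) deriv_sin_half_ne_zero hF hF0

theorem apply_add_of_sin_half_eq_zero {g : ℝ → ℂ} (hg : Function.Periodic g (2 * Real.pi)) (b : ℝ)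
    {u : ℝ} (hu : Real.sin (u / 2) = 0) : g (b + u) = g b := by
  obtain ⟨n, rfl⟩ := sin_half_eq_zero_iff.1 hu
  exact hg.int_mul n b

/-- The chord quotient `(τ b - τ (b + u)) / sin (u / 2)`, extended to coinciding points. -/
def chordQuotient (τ : ℝ → ℂ) : ℝ × ℝ → ℂ :=
  quotientSnd (fun u => Real.sin (u / 2)) fun p => τ p.1 - τ (p.1 + p.2)

theorem contDiff_chordQuotient {τ : ℝ → ℂ} (hτ : ContDiff ℝ ∞ τ)
    (hτper : Function.Periodic τ (2 * Real.pi)) : ContDiff ℝ ∞ (chordQuotient τ) :=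
  contDiff_quotientSnd_sin_half (by fun_prop) fun b u hu =>
    sub_eq_zero.2 (apply_add_of_sin_half_eq_zero hτper b hu).symm

theorem chordQuotient_of_ne_zero (τ : ℝ → ℂ) (b : ℝ) {u : ℝ} (hu : Real.sin (u / 2) ≠ 0) :
    chordQuotient τ (b, u) = (τ b - τ (b + u)) / (Real.sin (u / 2) : ℂ) := by
  rw [chordQuotient, quotientSnd_of_ne_zero (s := fun u => Real.sin (u / 2)) hu,
    Complex.real_smul, Complex.ofReal_inv, inv_mul_eq_div]

theorem chordQuotient_of_eq_zero {τ : ℝ → ℂ} (b : ℝ) {u : ℝ}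
    (hu : Real.sin (u / 2) = 0) :
    chordQuotient τ (b, u) = -(2 * deriv τ (b + u)) / (Real.cos (u / 2) : ℂ) := by
  have hderiv : deriv (fun v => τ b - τ (b + v)) u = -deriv τ (b + u) := by
    rw [deriv_const_sub, deriv_comp_const_add]
  rw [chordQuotient, quotientSnd_of_eq_zero (s := fun u => Real.sin (u / 2)) hu,
    (hasDerivAt_sin_half u).deriv, hderiv, Complex.real_smul, inv_div]
  push_cast
  ring

theorem chordQuotient_ne_zero {τ : ℝ → ℂ} (hτ' : ∀ α, deriv τ α ≠ 0)
    (hinj : ∀ α β : ℝ, (¬ ∃ n : ℤ, α - β = n * (2 * Real.pi)) → τ α ≠ τ β) (p : ℝ × ℝ) :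
    chordQuotient τ p ≠ 0 := by
  obtain ⟨b, u⟩ := p
  by_cases hu : Real.sin (u / 2) = 0
  · rw [chordQuotient_of_eq_zero b hu]
    exact div_ne_zero (neg_ne_zero.2 (mul_ne_zero two_ne_zero (hτ' _)))
      (Complex.ofReal_ne_zero.2 (cos_ne_zero_of_sin_eq_zero hu))
  · rw [chordQuotient_of_ne_zero τ b hu]
    refine div_ne_zero (sub_ne_zero.2 (hinj _ _ ?_).symm) (Complex.ofReal_ne_zero.2 hu)
    rwa [add_sub_cancel_left, ← sin_half_eq_zero_iff]

/-- `remainderKernel f τ (b + u) b` times `sin (u / 2)`, as a smooth function of `(b, u)`. -/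
def kernelNumerator (f τ : ℝ → ℂ) (p : ℝ × ℝ) : ℂ :=
  f p.1 / chordQuotient τ p
    + f (p.1 + p.2) / (2 * deriv τ (p.1 + p.2)) * (Real.cos (p.2 / 2) : ℂ)

theorem contDiff_kernelNumerator {f τ : ℝ → ℂ} (hτper : Function.Periodic τ (2 * Real.pi))
    (hf : ContDiff ℝ ∞ f) (hτ : ContDiff ℝ ∞ τ) (hτ' : ∀ α, deriv τ α ≠ 0)
    (hinj : ∀ α β : ℝ, (¬ ∃ n : ℤ, α - β = n * (2 * Real.pi)) → τ α ≠ τ β) :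
    ContDiff ℝ ∞ (kernelNumerator f τ) := by
  have hadd : ContDiff ℝ ∞ fun p : ℝ × ℝ => p.1 + p.2 := by fun_prop
  have hderiv : ContDiff ℝ ∞ (deriv τ) := (contDiff_infty_iff_deriv.1 hτ).2
  have hcos : ContDiff ℝ ∞ fun p : ℝ × ℝ => (Real.cos (p.2 / 2) : ℂ) :=
    Complex.ofRealCLM.contDiff.comp (Real.contDiff_cos.comp (contDiff_snd.div_const 2))
  have hchord : ContDiff ℝ ∞ fun p => (chordQuotient τ p)⁻¹ :=
    (contDiff_chordQuotient hτ hτper).inv (chordQuotient_ne_zero hτ' hinj)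
  have hspeed : ContDiff ℝ ∞ fun p : ℝ × ℝ => (2 * deriv τ (p.1 + p.2))⁻¹ :=
    (contDiff_const.mul (hderiv.comp hadd)).inv fun p => mul_ne_zero two_ne_zero (hτ' _)
  unfold kernelNumerator
  simpa only [div_eq_mul_inv, Function.comp_apply] using
    ((hf.comp contDiff_fst).mul hchord).add (((hf.comp hadd).mul hspeed).mul hcos)

theorem kernelNumerator_of_sin_half_eq_zero {f τ : ℝ → ℂ}
    (hfper : Function.Periodic f (2 * Real.pi)) (b : ℝ)
    {u : ℝ} (hu : Real.sin (u / 2) = 0) : kernelNumerator f τ (b, u) = 0 := by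
  rw [kernelNumerator, chordQuotient_of_eq_zero b hu, apply_add_of_sin_half_eq_zero hfper b hu,
    neg_div, div_neg, div_div_eq_mul_div]
  ring

theorem remainderKernel_eq_kernelNumerator_div (f τ : ℝ → ℂ) (b : ℝ) {u : ℝ}
    (hu : Real.sin (u / 2) ≠ 0) :
    remainderKernel f τ (b + u) b = kernelNumerator f τ (b, u) / (Real.sin (u / 2) : ℂ) := by
  have hu' : (Real.sin (u / 2) : ℂ) ≠ 0 := Complex.ofReal_ne_zero.2 hu
  simp only [remainderKernel, kernelNumerator]
  rw [chordQuotient_of_ne_zero τ b hu, show (b - (b + u)) / 2 = -(u / 2) by ring,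
    Real.cot_eq_cos_div_sin, Real.cos_neg, Real.sin_neg, Complex.ofReal_div, Complex.ofReal_neg,
    div_neg, mul_neg, sub_neg_eq_add, div_div_eq_mul_div,
    add_div, div_right_comm, mul_div_cancel_right₀ _ hu', mul_div_assoc]

theorem exists_contDiff_eq_remainderKernel {f τ : ℝ → ℂ}
    (hfper : Function.Periodic f (2 * Real.pi)) (hτper : Function.Periodic τ (2 * Real.pi))
    (hf : ContDiff ℝ ∞ f) (hτ : ContDiff ℝ ∞ τ) (hτ' : ∀ α, deriv τ α ≠ 0)
    (hinj : ∀ α β : ℝ, (¬ ∃ n : ℤ, α - β = n * (2 * Real.pi)) → τ α ≠ τ β) :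
    ∃ Q : ℝ × ℝ → ℂ, ContDiff ℝ ∞ Q ∧
      ∀ b u, Real.sin (u / 2) ≠ 0 → remainderKernel f τ (b + u) b = Q (b, u) := by
  refine ⟨_, contDiff_quotientSnd_sin_half (contDiff_kernelNumerator hτper hf hτ hτ' hinj)
    fun b u => kernelNumerator_of_sin_half_eq_zero hfper b, fun b u hu => ?_⟩
  rw [remainderKernel_eq_kernelNumerator_div f τ b hu,
    quotientSnd_of_ne_zero (s := fun u => Real.sin (u / 2)) hu, Complex.real_smul,
    Complex.ofReal_inv, inv_mul_eq_div]

theorem exists_norm_fwdDiff_iter_snd_le {Q : ℝ × ℝ → ℂ} (hQ : ContDiff ℝ ∞ Q) (n : ℕ) (r R T : ℝ) :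
    ∃ C, 0 < C ∧ ∀ b u t, |b| ≤ r → |u| ≤ R → 0 ≤ t → t ≤ T →
      ‖Δ_[t] ^[n] (fun v => Q (b, v)) u‖ ≤ C * t ^ n := by
  obtain ⟨C, hC⟩ := (isCompact_Icc (a := -r) (b := r)).prod
    (isCompact_Icc (a := -R) (b := R + n * T)) |>.exists_bound_of_continuousOn
    (contDiff_iteratedDeriv_snd hQ n).continuous.continuousOn
  refine ⟨max C 1, by positivity, fun b u t hb hu ht htT => ?_⟩
  refine norm_fwdDiff_iter_le ((hQ.comp (contDiff_prodMk_right b)).of_le (by exact_mod_cast le_top))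
    ht fun y hy => le_max_of_le_left (hC (b, y) ⟨abs_le.1 hb, ?_⟩)
  have hnt : n * t ≤ n * T := by gcongr
  exact ⟨(abs_le.1 hu).1.trans hy.1, hy.2.trans (add_le_add (abs_le.1 hu).2 hnt)⟩

end Kernel

section Grid

variable {N : ℤ}

theorem hgrid_pos (hN : 0 < N) : 0 < hgrid N :=
  div_pos Real.two_pi_pos (Int.cast_pos.2 hN)

theorem mul_hgrid (hN : 0 < N) : (N : ℝ) * hgrid N = 2 * Real.pi :=
  mul_div_cancel₀ _ (Int.cast_pos.2 hN).ne'

theorem gridPt_add (N i j : ℤ) : gridPt N (i + j) = gridPt N i + gridPt N j := by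
  rw [gridPt, Int.cast_add, add_mul, gridPt, gridPt]

theorem gridPt_self (hN : 0 < N) : gridPt N N = 2 * Real.pi := mul_hgrid hN

theorem mul_gridPt_comm (N j k : ℤ) : (j : ℂ) * (gridPt N k : ℂ) = k * (gridPt N j : ℂ) := by
  exact_mod_cast mul_left_comm (j : ℝ) k (hgrid N)

theorem abs_gridPt_le {k : ℤ} (hN : 0 < N) (hk : k ∈ idxs N) : |gridPt N k| ≤ Real.pi := by
  have hk' := Finset.mem_Icc.1 hk
  have hle : |2 * k| ≤ N := abs_le.2 ⟨by lia, by lia⟩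
  have hle' : 2 * |(k : ℝ)| ≤ N := by rw [← abs_two, ← abs_mul]; exact_mod_cast hle
  have := mul_le_mul_of_nonneg_right hle' (hgrid_pos hN).le
  rw [mul_hgrid hN] at this
  rw [gridPt, abs_mul, abs_of_pos (hgrid_pos hN)]
  linarith

theorem card_idxs (hN : 0 < N) (hev : Even N) : ((idxs N).card : ℤ) = N := by
  obtain ⟨m, rfl⟩ := hev
  rw [idxs, Int.card_Icc]
  lia

theorem abs_sub_lt_of_mem_idxs {k l : ℤ} (hk : k ∈ idxs N) (hl : l ∈ idxs N) : |k - l| < N := by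
  have hk' := Finset.mem_Icc.1 hk
  have hl' := Finset.mem_Icc.1 hl
  rw [abs_lt]
  lia

theorem sum_idxs_add_one {M : Type*} [AddCommMonoid M] (hN : 0 < N) (hev : Even N) {g : ℤ → M}
    (hg : Function.Periodic g N) :
    ∑ j ∈ idxs N, g (j + 1) = ∑ j ∈ idxs N, g j := by
  obtain ⟨m, rfl⟩ := hev
  have hinsert_last : Finset.Icc (-m + 1 + 1) (m + 1) =
      insert (m + 1) (Finset.Icc (-m + 1 + 1) m) :=
    (Finset.insert_Icc_right_eq_Icc_add_one (by lia)).symm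
  have hinsert_first : Finset.Icc (-m + 1) m = insert (-m + 1) (Finset.Icc (-m + 1 + 1) m) :=
    (Finset.insert_Icc_add_one_left_eq_Icc (by lia)).symm
  have hshift : ∑ j ∈ Finset.Icc (-m + 1) m, g (j + 1) =
      ∑ j ∈ Finset.Icc (-m + 1 + 1) (m + 1), g j := by
    rw [← Finset.map_add_right_Icc, Finset.sum_map]
    rfl
  rw [idxs, show (m + m) / 2 = m by lia, hshift, hinsert_last,
    Finset.sum_insert (by simp only [Finset.mem_Icc]; lia), hinsert_first,
    Finset.sum_insert (by simp only [Finset.mem_Icc]; lia), ← hg (-m + 1)]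
  congr 2
  ring

theorem sum_idxs_add {M : Type*} [AddCommMonoid M] (hN : 0 < N) (hev : Even N) {g : ℤ → M}
    (hg : Function.Periodic g N) (m : ℤ) :
    ∑ j ∈ idxs N, g (j + m) = ∑ j ∈ idxs N, g j := by
  have hS : Function.Periodic (fun m => ∑ j ∈ idxs N, g (j + m)) 1 := fun m => by
    have hgm : Function.Periodic (fun j => g (j + m)) N := fun j => by
      simp only [add_right_comm j N m, hg (j + m)]
    simpa only [add_assoc, add_comm 1 m] using sum_idxs_add_one hN hev hgm
  simpa only [mul_one, add_zero, Int.cast_id] using hS.int_mul_eq m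

theorem sin_half_gridPt_sub_ne_zero (hN : 0 < N) (hev : Even N) {i j : ℤ} (hodd : Odd (j - i)) :
    Real.sin ((gridPt N i - gridPt N j) / 2) ≠ 0 := by
  rw [Ne, sin_half_eq_zero_iff]
  rintro ⟨n, hn⟩
  rw [← mul_hgrid hN, gridPt, gridPt, ← sub_mul, ← mul_assoc] at hn
  have hij : i - j = n * N := by exact_mod_cast mul_right_cancel₀ (hgrid_pos hN).ne' hn
  have heven : Even (i - j) := hij ▸ hev.mul_left n
  rw [← neg_sub, odd_neg] at hodd
  exact Int.not_odd_iff_even.2 heven hodd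

end Grid

section Plancherel

variable {N : ℤ}

theorem exp_gridPt_periodic (hN : 0 < N) (k : ℤ) :
    Function.Periodic (fun j => Complex.exp (Complex.I * (k : ℂ) * (gridPt N j : ℂ))) N := by
  intro j
  have harg : Complex.I * (k : ℂ) * ((gridPt N j : ℂ) + 2 * Real.pi) =
      Complex.I * k * gridPt N j + k * (2 * Real.pi * Complex.I) := by ring
  simp only [gridPt_add, gridPt_self hN]
  push_cast
  rw [harg, Complex.exp_add, Complex.exp_int_mul_two_pi_mul_I, mul_one]

theorem exp_gridPt_ne_one (hN : 0 < N) {m : ℤ} (hm : |m| < N) (hm0 : m ≠ 0) :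
    Complex.exp (Complex.I * (m : ℂ) * (gridPt N 1 : ℂ)) ≠ 1 := by
  rw [Ne, Complex.exp_eq_one_iff]
  rintro ⟨n, hn⟩
  have hn' : (m : ℂ) * gridPt N 1 = n * (2 * Real.pi) :=
    mul_left_cancel₀ Complex.I_ne_zero (by linear_combination hn)
  have hn'' : (m : ℝ) * gridPt N 1 = n * (2 * Real.pi) := by exact_mod_cast hn'
  rw [← mul_hgrid hN, gridPt, Int.cast_one, one_mul, ← mul_assoc] at hn''
  have hmn : m = n * N := by exact_mod_cast mul_right_cancel₀ (hgrid_pos hN).ne' hn''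
  exact hm0 (Int.eq_zero_of_abs_lt_dvd (hmn ▸ dvd_mul_left N n) hm)

theorem sum_exp_gridPt (hN : 0 < N) (hev : Even N) {m : ℤ} (hm : |m| < N) :
    ∑ j ∈ idxs N, Complex.exp (Complex.I * (m : ℂ) * (gridPt N j : ℂ)) =
      if m = 0 then (N : ℂ) else 0 := by
  split_ifs with hm0
  · subst hm0
    simpa using congrArg (Int.cast : ℤ → ℂ) (card_idxs hN hev)
  · have hshift := sum_idxs_add_one hN hev (exp_gridPt_periodic hN m)
    simp only [gridPt_add, Complex.ofReal_add, mul_add, Complex.exp_add, ← Finset.sum_mul] at hshift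
    exact (mul_right_eq_self₀.1 hshift).resolve_left (exp_gridPt_ne_one hN hm hm0)

theorem sum_exp_mul_exp_neg (hN : 0 < N) (hev : Even N) {k l : ℤ} (hk : k ∈ idxs N)
    (hl : l ∈ idxs N) :
    ∑ j ∈ idxs N, Complex.exp (Complex.I * (k : ℂ) * (gridPt N j : ℂ)) *
      Complex.exp (-(Complex.I * (l : ℂ) * (gridPt N j : ℂ))) = if k = l then (N : ℂ) else 0 := by
  simp only [← sub_eq_zero (a := k) (b := l)]
  rw [← sum_exp_gridPt hN hev (abs_sub_lt_of_mem_idxs hk hl)]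
  refine Finset.sum_congr rfl fun j _ => ?_
  rw [← Complex.exp_add, Int.cast_sub, mul_sub, sub_mul, sub_eq_add_neg]

theorem dft_idft (hN : 0 < N) (hev : Even N) (c : ℤ → ℂ) {k : ℤ} (hk : k ∈ idxs N) :
    dft N (idft N c) k = c k := by
  have hN0 : (N : ℂ) ≠ 0 := Int.cast_ne_zero.2 hN.ne'
  simp only [dft, idft, Finset.sum_mul, mul_assoc (c _)]
  rw [Finset.sum_comm]
  simp only [← Finset.mul_sum]
  rw [Finset.sum_congr rfl fun l hl => by rw [sum_exp_mul_exp_neg hN hev hl hk]]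
  simp [hk, hN0, mul_comm]

theorem l2norm_sq (hN : 0 < N) (f : ℤ → ℂ) :
    l2norm N f ^ 2 = hgrid N * ∑ j ∈ idxs N, ‖f j‖ ^ 2 :=
  Real.sq_sqrt (mul_nonneg (hgrid_pos hN).le (by positivity))

theorem dip_self (hN : 0 < N) (f : ℤ → ℂ) : dip N f f = ((l2norm N f ^ 2 : ℝ) : ℂ) := by
  rw [l2norm_sq hN, dip]
  push_cast
  simp only [Complex.conj_mul']

theorem conj_exp_gridPt (N j k : ℤ) :
    (starRingEnd ℂ) (Complex.exp (Complex.I * (k : ℂ) * (gridPt N j : ℂ))) =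
      Complex.exp (-(Complex.I * (k : ℂ) * (gridPt N j : ℂ))) := by
  simp [← Complex.exp_conj]

theorem dip_idft (hN : 0 < N) (c g : ℤ → ℂ) :
    dip N (idft N c) g = 2 * Real.pi * ∑ k ∈ idxs N, (starRingEnd ℂ) (c k) * dft N g k := by
  have hN0 : (N : ℂ) ≠ 0 := Int.cast_ne_zero.2 hN.ne'
  have hNh : (2 * Real.pi : ℂ) = N * hgrid N := by exact_mod_cast (mul_hgrid hN).symm
  simp only [dip, idft, dft, map_sum, map_mul, conj_exp_gridPt, Finset.sum_mul, Finset.mul_sum, hNh]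
  rw [Finset.sum_comm]
  refine Finset.sum_congr rfl fun k _ => Finset.sum_congr rfl fun j _ => ?_
  field_simp

theorem l2norm_idft_sq (hN : 0 < N) (hev : Even N) (c : ℤ → ℂ) :
    l2norm N (idft N c) ^ 2 = 2 * Real.pi * ∑ k ∈ idxs N, ‖c k‖ ^ 2 := by
  have h := dip_idft hN c (idft N c)
  rw [dip_self hN, Finset.sum_congr rfl fun k hk => by
    rw [dft_idft hN hev c hk, Complex.conj_mul']] at h
  exact_mod_cast h

theorem dft_eq_conj_idft (N : ℤ) (f : ℤ → ℂ) (k : ℤ) :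
    dft N f k = (N : ℂ)⁻¹ * (starRingEnd ℂ) (idft N (fun j => (starRingEnd ℂ) (f j)) k) := by
  simp only [dft, idft, map_sum, map_mul, conj_exp_gridPt, Complex.conj_conj]
  simp only [mul_assoc, mul_gridPt_comm N _ k]

theorem l2norm_sq_eq_sum_norm_dft_sq (hN : 0 < N) (hev : Even N) (f : ℤ → ℂ) :
    l2norm N f ^ 2 = 2 * Real.pi * ∑ k ∈ idxs N, ‖dft N f k‖ ^ 2 := by
  have hN0 : (N : ℝ) ≠ 0 := Int.cast_ne_zero.2 hN.ne'
  have h := l2norm_idft_sq hN hev fun j => (starRingEnd ℂ) (f j)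
  simp only [l2norm_sq hN, RCLike.norm_conj, ← mul_hgrid hN] at h
  have hsum : ∑ k ∈ idxs N, ‖idft N (fun j => (starRingEnd ℂ) (f j)) k‖ ^ 2 =
      N * ∑ j ∈ idxs N, ‖f j‖ ^ 2 :=
    mul_left_cancel₀ (hgrid_pos hN).ne' (by linear_combination h)
  simp only [dft_eq_conj_idft, norm_mul, norm_inv, RCLike.norm_conj, mul_pow, ← Finset.mul_sum,
    hsum, Complex.norm_intCast, inv_pow, sq_abs, l2norm_sq hN, ← mul_hgrid hN]
  field_simp

theorem l2norm_le_of_norm_dft_le (hN : 0 < N) (hev : Even N) {f g : ℤ → ℂ} {B : ℝ} (hB : 0 ≤ B)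
    (h : ∀ k ∈ idxs N, ‖dft N f k‖ ≤ B * ‖dft N g k‖) : l2norm N f ≤ B * l2norm N g := by
  refine le_of_sq_le_sq ?_ (mul_nonneg hB (Real.sqrt_nonneg _))
  rw [mul_pow, l2norm_sq_eq_sum_norm_dft_sq hN hev, l2norm_sq_eq_sum_norm_dft_sq hN hev,
    mul_left_comm, Finset.mul_sum _ _ (B ^ 2)]
  gcongr with k hk
  rw [← mul_pow]
  gcongr
  exact h k hk

end Plancherel

section DifferenceSymbols

variable {N : ℤ}

theorem dft_comp_add (hN : 0 < N) (hev : Even N) {g : ℤ → ℂ} (hg : Function.Periodic g N)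
    (m k : ℤ) :
    dft N (fun i => g (i + m)) k =
      Complex.exp (Complex.I * (m : ℂ) * (gridPt N k : ℂ)) * dft N g k := by
  have hper : Function.Periodic
      (fun j => g j * Complex.exp (-(Complex.I * (k : ℂ) * (gridPt N j : ℂ)))) N := by
    simpa using hg.mul (exp_gridPt_periodic hN (-k))
  rw [dft, dft, ← sum_idxs_add hN hev hper m, mul_left_comm, Finset.mul_sum _ _ (Complex.exp _)]
  refine congrArg _ (Finset.sum_congr rfl fun j _ => ?_)
  rw [mul_left_comm, ← Complex.exp_add, gridPt_add, Complex.ofReal_add, mul_assoc _ (m : ℂ),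
    mul_gridPt_comm N m k]
  ring_nf

theorem fwdDiff_periodic {M : Type*} [AddCommGroup M] {g : ℤ → M}
    (hg : Function.Periodic g N) (m : ℤ) :
    Function.Periodic (Δ_[m] g) N := fun i => by
  simp only [fwdDiff, add_right_comm i N m, hg i, hg (i + m)]

theorem dft_fwdDiff (hN : 0 < N) (hev : Even N) {g : ℤ → ℂ} (hg : Function.Periodic g N)
    (m k : ℤ) :
    dft N (Δ_[m] g) k =
      (Complex.exp (Complex.I * (m : ℂ) * (gridPt N k : ℂ)) - 1) * dft N g k := by
  rw [sub_mul, one_mul, ← dft_comp_add hN hev hg]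
  simp only [dft, fwdDiff, sub_mul, Finset.sum_sub_distrib, mul_sub]

theorem dft_fwdDiff_iter (hN : 0 < N) (hev : Even N) {g : ℤ → ℂ} (hg : Function.Periodic g N)
    (m k : ℤ) (n : ℕ) :
    dft N (Δ_[m] ^[n] g) k =
      (Complex.exp (Complex.I * (m : ℂ) * (gridPt N k : ℂ)) - 1) ^ n * dft N g k := by
  induction n generalizing g with
  | zero => simp
  | succ n ih =>
    rw [Function.iterate_succ_apply, ih (fwdDiff_periodic hg m), dft_fwdDiff hN hev hg, pow_succ,
      mul_assoc (_ ^ n)]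

theorem norm_dft_fwdDiff_two_iter (hN : 0 < N) (hev : Even N) {g : ℤ → ℂ}
    (hg : Function.Periodic g N) (k : ℤ) (n : ℕ) :
    ‖dft N (Δ_[2] ^[n] g) k‖ = (2 * |Real.sin (gridPt N k)|) ^ n * ‖dft N g k‖ := by
  have hsymbol : ‖Complex.exp (Complex.I * ((2 : ℤ) : ℂ) * (gridPt N k : ℂ)) - 1‖ =
      2 * |Real.sin (gridPt N k)| := by
    have h := Complex.norm_exp_I_mul_ofReal_sub_one (2 * gridPt N k)
    rw [mul_div_cancel_left₀ _ (two_ne_zero' ℝ), norm_mul, Real.norm_ofNat, Real.norm_eq_abs] at h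
    rw [← h, mul_assoc]
    push_cast
    rfl
  rw [dft_fwdDiff_iter hN hev hg, norm_mul, norm_pow, hsymbol]

theorem dft_Dh_iter (hN : 0 < N) (hev : Even N) (ρ : ℝ → ℝ) (g : ℤ → ℂ) {k : ℤ}
    (hk : k ∈ idxs N) (n : ℕ) :
    dft N ((Dh N ρ)^[n] g) k =
      (Complex.I * (k : ℂ) * (ρ (gridPt N k) : ℂ)) ^ n * dft N g k := by
  induction n with
  | zero => simp
  | succ n ih =>
    rw [Function.iterate_succ_apply', Dh, dft_idft hN hev _ hk, ih, pow_succ',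
      mul_assoc (_ * _ * _)]

theorem l2norm_Dh_iter_le (hN : 0 < N) (hev : Even N) {ρ : ℝ → ℝ} {B : ℝ} (hB : 0 ≤ B)
    (hρ : ∀ x, |x| ≤ Real.pi → |x * ρ x| ≤ B * |Real.sin x|) {g : ℤ → ℂ}
    (hg : Function.Periodic g N) (n : ℕ) :
    l2norm N ((Dh N ρ)^[n] g) ≤ (B / (2 * hgrid N)) ^ n * l2norm N (Δ_[2] ^[n] g) := by
  have hh := hgrid_pos hN
  refine l2norm_le_of_norm_dft_le hN hev (by positivity) fun k hk => ?_
  have hsymbol : ‖Complex.I * (k : ℂ) * (ρ (gridPt N k) : ℂ)‖ ≤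
      B / (2 * hgrid N) * (2 * |Real.sin (gridPt N k)|) := by
    have hk' := hρ _ (abs_gridPt_le hN hk)
    rw [abs_mul, gridPt, abs_mul, abs_of_pos hh, ← gridPt] at hk'
    rw [norm_mul, norm_mul, Complex.norm_I, one_mul, Complex.norm_intCast, Complex.norm_real,
      Real.norm_eq_abs, div_mul_eq_mul_div, mul_left_comm, mul_div_mul_left _ _ two_ne_zero,
      le_div_iff₀ hh, mul_right_comm]
    exact hk'
  rw [dft_Dh_iter hN hev ρ g hk, norm_dft_fwdDiff_two_iter hN hev hg, norm_mul, norm_pow,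
    ← mul_assoc, ← mul_pow]
  gcongr

theorem l2norm_filterP_le (hN : 0 < N) (hev : Even N) {ρ : ℝ → ℝ} {M : ℝ} (hM : 0 ≤ M)
    (hρ : ∀ x, |x| ≤ Real.pi → |ρ x| ≤ M) (φ : ℤ → ℂ) :
    l2norm N (filterP N ρ φ) ≤ M * l2norm N φ := by
  refine l2norm_le_of_norm_dft_le hN hev hM fun k hk => ?_
  rw [filterP, dft_idft hN hev _ hk, norm_mul, Complex.norm_real, Real.norm_eq_abs]
  gcongr
  exact hρ _ (abs_gridPt_le hN hk)

end DifferenceSymbols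

section Filter

theorem mul_pi_sub_le_sin {x : ℝ} (hx0 : 0 ≤ x) (hxπ : x ≤ Real.pi) :
    x * (Real.pi - x) ≤ Real.pi ^ 2 / 2 * Real.sin x := by
  wlog hx : x ≤ Real.pi / 2 generalizing x
  · have h := this (x := Real.pi - x) (by linarith) (by linarith) (by linarith)
    rwa [sub_sub_cancel, mul_comm, Real.sin_pi_sub] at h
  · have hsin := Real.mul_le_sin hx0 hx
    rw [div_mul_eq_mul_div, div_le_iff₀ Real.pi_pos] at hsin
    nlinarith [Real.pi_pos]

theorem abs_mul_pi_sub_abs_le_abs_sin {x : ℝ} (hx : |x| ≤ Real.pi) :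
    |x| * (Real.pi - |x|) ≤ Real.pi ^ 2 / 2 * |Real.sin x| := by
  rw [Real.abs_sin_eq_sin_abs_of_abs_le_pi hx]
  exact mul_pi_sub_le_sin (abs_nonneg x) hx

theorem IsFilter.exists_abs_le_mul_pi_sub {ρ : ℝ → ℝ} (hρ : IsFilter ρ) :
    ∃ L, ∀ x, |x| ≤ Real.pi → |ρ x| ≤ L * (Real.pi - |x|) := by
  obtain ⟨r, hr, hsmooth⟩ := hρ.smooth
  have hC1 : ContDiff ℝ 1 ρ := hsmooth.of_le (by exact_mod_cast (by lia : 1 ≤ r))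
  obtain ⟨L, hL⟩ := (isCompact_Icc (a := (0 : ℝ)) (b := Real.pi)).exists_bound_of_continuousOn
    (hC1.continuous_deriv le_rfl).continuousOn
  refine ⟨L, fun x hx => ?_⟩
  have heven : ρ |x| = ρ x := by
    rcases abs_choice x with h | h <;> simp only [h, hρ.even]
  have h := (convex_Icc (0 : ℝ) Real.pi).norm_image_sub_le_of_norm_deriv_le
    (fun y _ => hC1.differentiable one_ne_zero y) hL
    (Set.right_mem_Icc.2 Real.pi_pos.le) ⟨abs_nonneg x, hx⟩
  rwa [hρ.zero_at_pi, sub_zero, heven, Real.norm_eq_abs, norm_sub_rev,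
    Real.norm_of_nonneg (sub_nonneg.2 hx)] at h

end Filter

section OddSums

variable {N : ℤ}

/-- The alternate-point trapezoidal rule for `(1/(2π)) ∫ q(β) w(α, β) dβ`, which at index `i`
samples only the `j` of opposite parity. -/
def oddSum (N : ℤ) (w : ℤ → ℤ → ℂ) (q : ℤ → ℂ) (i : ℤ) : ℂ :=
  ((hgrid N / Real.pi : ℝ) : ℂ) * ∑ j ∈ (idxs N).filter (fun j => Odd (j - i)), q j * w i j

theorem K1h_eq_oddSum (N : ℤ) (f τ : ℝ → ℂ) (q : ℤ → ℂ) :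
    K1h N f τ q = oddSum N (fun i j => remainderKernel f τ (gridPt N i) (gridPt N j)) q := rfl

theorem odd_sub_add_iff {m : ℤ} (hm : Even m) (i j : ℤ) : Odd (j - (i + m)) ↔ Odd (j - i) := by
  rw [← sub_sub, Int.odd_sub, iff_not_comm.1 Int.not_odd_iff_even.symm]
  simp [hm]

theorem fwdDiff_oddSum {m : ℤ} (hm : Even m) (w : ℤ → ℤ → ℂ) (q : ℤ → ℂ) :
    Δ_[m] (oddSum N w q) = oddSum N (fun i j => Δ_[m] (fun i => w i j) i) q := by
  funext i
  simp only [fwdDiff, oddSum, odd_sub_add_iff hm, mul_sub, Finset.sum_sub_distrib]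

theorem fwdDiff_iter_oddSum {m : ℤ} (hm : Even m) (w : ℤ → ℤ → ℂ) (q : ℤ → ℂ) (n : ℕ) :
    Δ_[m] ^[n] (oddSum N w q) = oddSum N (fun i j => Δ_[m] ^[n] (fun i => w i j) i) q := by
  induction n generalizing w with
  | zero => rfl
  | succ n ih => simp only [Function.iterate_succ_apply, fwdDiff_oddSum hm, ih]

theorem norm_oddSum_le (hN : 0 < N) {w : ℤ → ℤ → ℂ} {D : ℝ} {i : ℤ} (hD : 0 ≤ D)
    (hw : ∀ j ∈ idxs N, Odd (j - i) → ‖w i j‖ ≤ D) (q : ℤ → ℂ) :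
    ‖oddSum N w q i‖ ≤ hgrid N / Real.pi * (D * ∑ j ∈ idxs N, ‖q j‖) := by
  have hh := hgrid_pos hN
  rw [oddSum, norm_mul, Complex.norm_real, Real.norm_of_nonneg (by positivity), Finset.mul_sum]
  gcongr
  refine (norm_sum_le_of_le _ fun j hj => ?_).trans
    (Finset.sum_le_sum_of_subset_of_nonneg (Finset.filter_subset _ _) fun j _ _ => by positivity)
  obtain ⟨hj, hodd⟩ := Finset.mem_filter.1 hj
  rw [norm_mul, mul_comm]
  gcongr
  exact hw j hj hodd

theorem l2norm_oddSum_le (hN : 0 < N) (hev : Even N) {w : ℤ → ℤ → ℂ} {D : ℝ} (hD : 0 ≤ D)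
    (hw : ∀ i ∈ idxs N, ∀ j ∈ idxs N, Odd (j - i) → ‖w i j‖ ≤ D) (q : ℤ → ℂ) :
    l2norm N (oddSum N w q) ≤ 2 * D * l2norm N q := by
  have hh := hgrid_pos hN
  have hcard : ((idxs N).card : ℝ) = N := by exact_mod_cast card_idxs hN hev
  have hcauchy : (∑ j ∈ idxs N, ‖q j‖) ^ 2 ≤ N * ∑ j ∈ idxs N, ‖q j‖ ^ 2 :=
    hcard ▸ sq_sum_le_card_mul_sum_sq
  refine le_of_sq_le_sq ?_ (mul_nonneg (by positivity) (Real.sqrt_nonneg _))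
  rw [mul_pow _ (l2norm N q), l2norm_sq hN, l2norm_sq hN]
  calc hgrid N * ∑ i ∈ idxs N, ‖oddSum N w q i‖ ^ 2
      ≤ hgrid N * ∑ _i ∈ idxs N, (hgrid N / Real.pi * (D * ∑ j ∈ idxs N, ‖q j‖)) ^ 2 := by
        gcongr with i hi
        exact norm_oddSum_le hN hD (hw i hi) q
    _ = hgrid N * N * (hgrid N / Real.pi * D) ^ 2 * (∑ j ∈ idxs N, ‖q j‖) ^ 2 := by
        rw [Finset.sum_const, nsmul_eq_mul, hcard]
        ring
    _ ≤ hgrid N * N * (hgrid N / Real.pi * D) ^ 2 * (N * ∑ j ∈ idxs N, ‖q j‖ ^ 2) := by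
        gcongr
    _ = (N * hgrid N / Real.pi * D) ^ 2 * (hgrid N * ∑ j ∈ idxs N, ‖q j‖ ^ 2) := by ring
    _ = (2 * D) ^ 2 * (hgrid N * ∑ j ∈ idxs N, ‖q j‖ ^ 2) := by
        rw [mul_hgrid hN, mul_div_cancel_right₀ _ Real.pi_ne_zero]

end OddSums

section Remainder

variable {N : ℤ} {f τ : ℝ → ℂ}

theorem K1h_periodic (hN : 0 < N) (hev : Even N) (hfper : Function.Periodic f (2 * Real.pi))
    (hτper : Function.Periodic τ (2 * Real.pi)) (q : ℤ → ℂ) :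
    Function.Periodic (K1h N f τ q) N := fun i => by
  simp only [K1h_eq_oddSum, oddSum, odd_sub_add_iff hev, gridPt_add, gridPt_self hN,
    fun b => remainderKernel_periodic hfper hτper b (gridPt N i)]

theorem fwdDiff_iter_remainderKernel_gridPt (hN : 0 < N) (hev : Even N) {Q : ℝ × ℝ → ℂ}
    (hQ : ∀ b u, Real.sin (u / 2) ≠ 0 → remainderKernel f τ (b + u) b = Q (b, u)) {i j : ℤ}
    (hodd : Odd (j - i)) (n : ℕ) :
    Δ_[2] ^[n] (fun i => remainderKernel f τ (gridPt N i) (gridPt N j)) i =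
      Δ_[2 * hgrid N] ^[n] (fun u => Q (gridPt N j, u)) (gridPt N i - gridPt N j) := by
  rw [fwdDiff_iter_eq_sum_shift, fwdDiff_iter_eq_sum_shift]
  refine Finset.sum_congr rfl fun l _ => congrArg _ ?_
  have hshift : gridPt N i - gridPt N j + l • (2 * hgrid N) =
      gridPt N (i + l • 2) - gridPt N j := by
    rw [gridPt_add, gridPt, gridPt, gridPt]
    push_cast [nsmul_eq_mul]
    ring
  rw [hshift, ← hQ _ _ (sin_half_gridPt_sub_ne_zero hN hev
    ((odd_sub_add_iff (even_two.nsmul_right l) i j).2 hodd)), add_sub_cancel]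

theorem exists_l2norm_fwdDiff_iter_K1h_le (hfper : Function.Periodic f (2 * Real.pi))
    (hτper : Function.Periodic τ (2 * Real.pi)) (hf : ContDiff ℝ ∞ f) (hτ : ContDiff ℝ ∞ τ)
    (hτ' : ∀ α, deriv τ α ≠ 0)
    (hinj : ∀ α β : ℝ, (¬ ∃ n : ℤ, α - β = n * (2 * Real.pi)) → τ α ≠ τ β) (n : ℕ) :
    ∃ C, 0 ≤ C ∧ ∀ N : ℤ, 0 < N → Even N → ∀ q,
      l2norm N (Δ_[2] ^[n] (K1h N f τ q)) ≤ C * (2 * hgrid N) ^ n * l2norm N q := by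
  obtain ⟨Q, hQsmooth, hQ⟩ := exists_contDiff_eq_remainderKernel hfper hτper hf hτ hτ' hinj
  obtain ⟨C, hC, hbound⟩ :=
    exists_norm_fwdDiff_iter_snd_le hQsmooth n Real.pi (2 * Real.pi) (2 * Real.pi)
  refine ⟨2 * C, by positivity, fun N hN hev q => ?_⟩
  have hh := hgrid_pos hN
  have hstep : 2 * hgrid N ≤ 2 * Real.pi := by
    have hN2 : (2 : ℝ) ≤ N := by exact_mod_cast (by obtain ⟨m, rfl⟩ := hev; lia : 2 ≤ N)
    rw [← mul_hgrid hN]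
    gcongr
  rw [K1h_eq_oddSum, fwdDiff_iter_oddSum even_two, mul_assoc 2 C]
  refine l2norm_oddSum_le hN hev (by positivity) (fun i hi j hj hodd => ?_) q
  rw [fwdDiff_iter_remainderKernel_gridPt hN hev hQ hodd]
  refine hbound _ _ _ (abs_gridPt_le hN hj) ?_ (by positivity) hstep
  linarith [abs_sub (gridPt N i) (gridPt N j), abs_gridPt_le hN hi, abs_gridPt_le hN hj]

theorem exists_l2norm_Dh_iter_K1h_le (hfper : Function.Periodic f (2 * Real.pi))
    (hτper : Function.Periodic τ (2 * Real.pi)) (hf : ContDiff ℝ ∞ f) (hτ : ContDiff ℝ ∞ τ)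
    (hτ' : ∀ α, deriv τ α ≠ 0)
    (hinj : ∀ α β : ℝ, (¬ ∃ n : ℤ, α - β = n * (2 * Real.pi)) → τ α ≠ τ β) {ρ : ℝ → ℝ} {L : ℝ}
    (hL : 0 ≤ L) (hρ : ∀ x, |x| ≤ Real.pi → |ρ x| ≤ L * (Real.pi - |x|)) (n : ℕ) :
    ∃ C, 0 ≤ C ∧ ∀ N : ℤ, 0 < N → Even N → ∀ q,
      l2norm N ((Dh N ρ)^[n] (K1h N f τ q)) ≤ C * l2norm N q := by
  obtain ⟨C, hC, hbound⟩ := exists_l2norm_fwdDiff_iter_K1h_le hfper hτper hf hτ hτ' hinj n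
  set B := L * (Real.pi ^ 2 / 2)
  have hB : 0 ≤ B := by positivity
  have hsin : ∀ x, |x| ≤ Real.pi → |x * ρ x| ≤ B * |Real.sin x| := fun x hx =>
    calc |x * ρ x| ≤ |x| * (L * (Real.pi - |x|)) := by rw [abs_mul]; gcongr; exact hρ x hx
      _ = L * (|x| * (Real.pi - |x|)) := mul_left_comm _ _ _
      _ ≤ L * (Real.pi ^ 2 / 2 * |Real.sin x|) :=
        mul_le_mul_of_nonneg_left (abs_mul_pi_sub_abs_le_abs_sin hx) hL
      _ = B * |Real.sin x| := (mul_assoc _ _ _).symm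
  refine ⟨B ^ n * C, by positivity, fun N hN hev q => ?_⟩
  have hh := hgrid_pos hN
  calc l2norm N ((Dh N ρ)^[n] (K1h N f τ q))
      ≤ (B / (2 * hgrid N)) ^ n * l2norm N (Δ_[2] ^[n] (K1h N f τ q)) :=
        l2norm_Dh_iter_le hN hev hB hsin (K1h_periodic hN hev hfper hτper q) n
    _ ≤ (B / (2 * hgrid N)) ^ n * (C * (2 * hgrid N) ^ n * l2norm N q) := by
        gcongr; exact hbound N hN hev q
    _ = B ^ n * C * l2norm N q := by rw [div_pow]; field_simp

theorem exists_l2norm_Dh_iter_K1h_filterP_le (hfper : Function.Periodic f (2 * Real.pi))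
    (hτper : Function.Periodic τ (2 * Real.pi)) (hf : ContDiff ℝ ∞ f) (hτ : ContDiff ℝ ∞ τ)
    (hτ' : ∀ α, deriv τ α ≠ 0)
    (hinj : ∀ α β : ℝ, (¬ ∃ n : ℤ, α - β = n * (2 * Real.pi)) → τ α ≠ τ β) {ρ : ℝ → ℝ} {L : ℝ}
    (hρ : ∀ x, |x| ≤ Real.pi → |ρ x| ≤ L * (Real.pi - |x|)) (n : ℕ) :
    ∃ C, 0 ≤ C ∧ ∀ N : ℤ, 0 < N → Even N → ∀ φ,
      l2norm N ((Dh N ρ)^[n] (K1h N f τ (filterP N ρ φ))) ≤ C * l2norm N φ := by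
  have hπ := Real.pi_pos
  have hL : 0 ≤ L := by
    have h0 := (abs_nonneg _).trans (hρ 0 (by simpa using hπ.le))
    rw [abs_zero, sub_zero] at h0
    exact nonneg_of_mul_nonneg_left h0 hπ
  have hρ_le : ∀ x, |x| ≤ Real.pi → |ρ x| ≤ L * Real.pi := fun x hx =>
    (hρ x hx).trans (mul_le_mul_of_nonneg_left (sub_le_self _ (abs_nonneg x)) hL)
  obtain ⟨C, hC, hbound⟩ := exists_l2norm_Dh_iter_K1h_le hfper hτper hf hτ hτ' hinj hL hρ n
  refine ⟨C * (L * Real.pi), by positivity, fun N hN hev φ => ?_⟩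
  calc l2norm N ((Dh N ρ)^[n] (K1h N f τ (filterP N ρ φ)))
      ≤ C * l2norm N (filterP N ρ φ) := hbound N hN hev _
    _ ≤ C * (L * Real.pi * l2norm N φ) :=
        mul_le_mul_of_nonneg_left (l2norm_filterP_le hN hev (by positivity) hρ_le φ) hC
    _ = C * (L * Real.pi) * l2norm N φ := (mul_assoc _ _ _).symm

theorem Ih_eq_neg_mul_Hh_add_K1h (N : ℤ) (f τ : ℝ → ℂ) (q : ℤ → ℂ) (i : ℤ) :
    Ih N f τ q i =
      -(f (gridPt N i) / (2 * deriv τ (gridPt N i))) * Hh N q i + K1h N f τ q i := by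
  rw [Ih, Hh, K1h, mul_left_comm, ← mul_add,
    Finset.mul_sum _ _ (-(f (gridPt N i) / _)), ← Finset.sum_add_distrib]
  refine congrArg _ (Finset.sum_congr rfl fun j _ => ?_)
  have hcot : Real.cot ((gridPt N i - gridPt N j) / 2) =
      -Real.cot ((gridPt N j - gridPt N i) / 2) := by
    rw [← neg_sub (gridPt N j), neg_div, Real.cot_eq_cos_div_sin, Real.cot_eq_cos_div_sin,
      Real.cos_neg, Real.sin_neg, div_neg]
  rw [hcot]
  push_cast
  ring

end Remainder

theorem Ih_decomposition_general (f τ : ℝ → ℂ)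
    (hfper : Function.Periodic f (2 * Real.pi)) (hτper : Function.Periodic τ (2 * Real.pi))
    (hf : ContDiff ℝ (⊤ : ℕ∞) f) (hτ : ContDiff ℝ (⊤ : ℕ∞) τ)
    (hτ' : ∀ α : ℝ, deriv τ α ≠ 0)
    (hinj : ∀ α β : ℝ, (¬ ∃ n : ℤ, α - β = n * (2 * Real.pi)) → τ α ≠ τ β)
    (ρ : ℝ → ℝ) {L : ℝ} (hρ : ∀ x, |x| ≤ Real.pi → |ρ x| ≤ L * (Real.pi - |x|)) (n : ℕ) :
    (∀ (N : ℤ) (q : ℤ → ℂ) (i : ℤ),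
      Ih N f τ q i =
        -(f (gridPt N i) / (2 * deriv τ (gridPt N i))) * Hh N q i + K1h N f τ q i) ∧
    ∃ c : ℝ, 0 < c ∧ ∀ N : ℤ, 2 ≤ N → Even N → ∀ φ : ℤ → ℂ, ∀ k : ℕ, k ≤ n →
      l2norm N ((Dh N ρ)^[k] (K1h N f τ (filterP N ρ φ))) ≤ c * l2norm N φ := by
  refine ⟨fun N => Ih_eq_neg_mul_Hh_add_K1h N f τ, ?_⟩
  choose C hC hbound using exists_l2norm_Dh_iter_K1h_filterP_le hfper hτper hf hτ hτ' hinj hρ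
  have hsum : 0 ≤ ∑ k ∈ Finset.range (n + 1), C k := Finset.sum_nonneg fun k _ => hC k
  refine ⟨∑ k ∈ Finset.range (n + 1), C k + 1, by positivity, fun N hN hev φ k hk => ?_⟩
  have hk_le : C k ≤ ∑ k ∈ Finset.range (n + 1), C k :=
    Finset.single_le_sum (fun k _ => hC k) (Finset.mem_range.2 (Nat.lt_succ_of_le hk))
  exact (hbound k N (by lia) hev φ).trans
    (mul_le_mul_of_nonneg_right (by linarith) (Real.sqrt_nonneg _))

/-- Lemma 9.1: decomposition of `I_h` into a Hilbert-transform part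
plus a smoothing remainder `K_{1h}`, with `K_{1h}(φ^p) = A_{-2}(φ)`. -/
theorem Ih_decomposition (f τ : ℝ → ℂ)
    (hfper : Function.Periodic f (2 * Real.pi)) (hτper : Function.Periodic τ (2 * Real.pi))
    (hf : ContDiff ℝ (⊤ : ℕ∞) f) (hτ : ContDiff ℝ (⊤ : ℕ∞) τ)
    (hτ' : ∀ α : ℝ, deriv τ α ≠ 0)
    (hinj : ∀ α β : ℝ, (¬ ∃ n : ℤ, α - β = n * (2 * Real.pi)) → τ α ≠ τ β)
    (ρ : ℝ → ℝ) (hρ : IsFilter ρ) :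
    (∀ N : ℤ, 2 ≤ N → Even N → ∀ q : ℤ → ℂ, ∀ i ∈ idxs N,
      Ih N f τ q i =
        -(f (gridPt N i) / (2 * deriv τ (gridPt N i))) * Hh N q i + K1h N f τ q i) ∧
    ∃ c : ℝ, 0 < c ∧ ∀ N : ℤ, 2 ≤ N → Even N → ∀ φ : ℤ → ℂ, ∀ k : ℕ, k ≤ 2 →
      l2norm N ((Dh N ρ)^[k] (K1h N f τ (filterP N ρ φ))) ≤ c * l2norm N φ := by
  obtain ⟨L, hL⟩ := hρ.exists_abs_le_mul_pi_sub
  obtain ⟨hdecomp, hbound⟩ :=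
    Ih_decomposition_general f τ hfper hτper hf hτ hτ' hinj ρ hL 2
  exact ⟨fun N _ _ q i _ => hdecomp N q i, hbound⟩

end
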